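/- arXiv:1502.03967 — 3 statements merged into one kernel-verified Lean document; each statement's English description precedes it below -/
import Mathlib

section
/- Let > be a semigroup order on the monomials of A = K[x₁,…,xₙ] whose local variables are exactly x_{j₁},…,x_{j_k}, and let S := {1+g : g ∈ A, g = 0 or lt(g) < 1}. Then > is a control order if and only if for every proper ideal I ⊆ A and every minimal primary decomposition I = Q₁ ∩ … ∩ Q_r, numbered so that Q_i + ⟨x_{j₁},…,x_{j_k}⟩ ≠ A exactly for i = 1,…,m, one has that S⁻¹I = S⁻¹Q₁ ∩ … ∩ S⁻¹Q_m is a minimal primary decomposition in S⁻¹A and (S⁻¹I)^c = Q₁ ∩ … ∩ Q_m is a minimal primary decomposition in A. -/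
open scoped Classical

noncomputable section

/-- A semigroup order on monomials: a strict total order on exponent vectors (written
additively; the monomial `1` corresponds to `0`) compatible with multiplication. -/
def IsSemigroupOrder {σ : Type*} (lt : (σ →₀ ℕ) → (σ →₀ ℕ) → Prop) : Prop :=
  IsStrictTotalOrder (σ →₀ ℕ) lt ∧ ∀ a b c : σ →₀ ℕ, lt a b → lt (c + a) (c + b)

/-- The variable `i` is local for the order `lt`, i.e. `x_i < 1`. -/
def IsLocalVar {σ : Type*} (lt : (σ →₀ ℕ) → (σ →₀ ℕ) → Prop) (i : σ) : Prop :=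
  lt (Finsupp.single i 1) 0

/-- A control order: a semigroup order under which every monomial divisible by a local
variable is `< 1`. -/
def IsControlOrder {σ : Type*} (lt : (σ →₀ ℕ) → (σ →₀ ℕ) → Prop) : Prop :=
  IsSemigroupOrder lt ∧ ∀ m : σ →₀ ℕ, (∃ i, IsLocalVar lt i ∧ m i ≠ 0) → lt m 0

/-- `m` is the leading monomial of `g` w.r.t. `lt`. -/
def IsLeadingMonomial {K : Type*} [CommSemiring K] {σ : Type*}
    (lt : (σ →₀ ℕ) → (σ →₀ ℕ) → Prop) (g : MvPolynomial σ K) (m : σ →₀ ℕ) : Prop :=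
  m ∈ g.support ∧ ∀ m' ∈ g.support, m' ≠ m → lt m' m

/-- The multiplicative set `S = {1 + g : g = 0 or lt(g) < 1}`. -/
def SDen (K : Type*) [CommSemiring K] {σ : Type*}
    (lt : (σ →₀ ℕ) → (σ →₀ ℕ) → Prop) : Set (MvPolynomial σ K) :=
  {f | ∃ g : MvPolynomial σ K, f = 1 + g ∧
    (g = 0 ∨ ∃ m, IsLeadingMonomial lt g m ∧ lt m 0)}

/-- `I = ⋂ i ∈ s, Q i` is a minimal primary decomposition: every `Q i` is primary, the
radicals are pairwise distinct, and no component contains the intersection of the others. -/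
def MinPrimDecOn {R : Type*} [CommRing R] {ι : Type*} (I : Ideal R) (Q : ι → Ideal R)
    (s : Finset ι) : Prop :=
  I = ⨅ i ∈ s, Q i ∧ (∀ i ∈ s, (Q i).IsPrimary) ∧
    (∀ i ∈ s, ∀ j ∈ s, (Q i).radical = (Q j).radical → i = j) ∧
    ∀ i ∈ s, ¬ (⨅ j ∈ s.erase i, Q j) ≤ Q i

/-- The extraction determined by the decomposition `Q` (over `s`) and the ideal `J`:
the intersection of those components `Q i` with `Q i + J ≠ A` (which is `⊤` = the whole
ring when there are no such components). -/
def extractionFrom {R : Type*} [CommRing R] {ι : Type*} (J : Ideal R) (Q : ι → Ideal R)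
    (s : Finset ι) : Ideal R :=
  ⨅ i ∈ s.filter (fun i => Q i ⊔ J ≠ ⊤), Q i

/-- `B` is the extraction `β(I,J)` of `I` by `J`. -/
def IsExtraction {R : Type*} [CommRing R] (I J B : Ideal R) : Prop :=
  ∃ (k : ℕ) (Q : Fin k → Ideal R), MinPrimDecOn I Q Finset.univ ∧
    B = extractionFrom J Q Finset.univ

/-- `t ⊆ s` determines an isolated set of primes of the decomposition `Q` over `s`. -/
def IsIsolatedOn {R : Type*} [CommRing R] {ι : Type*} (Q : ι → Ideal R)
    (s t : Finset ι) : Prop :=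
  t ⊆ s ∧ ∀ j ∈ s, (∃ i ∈ t, (Q j).radical ≤ (Q i).radical) → j ∈ t

/-- The lifted ideal `W' = ⟨W, t₁ - g₁, …, t_s - g_s⟩ ⊆ A' = K[x₁,…,xₙ,t₁,…,t_s]`. -/
def liftIdeal {K : Type*} [CommRing K] {n s : ℕ} (g : Fin s → MvPolynomial (Fin n) K)
    (W : Ideal (MvPolynomial (Fin n) K)) : Ideal (MvPolynomial (Fin n ⊕ Fin s) K) :=
  W.map (MvPolynomial.rename (Sum.inl : Fin n → Fin n ⊕ Fin s)).toRingHom ⊔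
    Ideal.span (Set.range fun w : Fin s =>
      (MvPolynomial.X (Sum.inr w) : MvPolynomial (Fin n ⊕ Fin s) K) -
        MvPolynomial.rename (Sum.inl : Fin n → Fin n ⊕ Fin s) (g w))

/-- The substitution homomorphism `φ : A' → A`, fixing each `x_i` and sending `t_w ↦ g_w`. -/
def substHom {K : Type*} [CommRing K] {n s : ℕ} (g : Fin s → MvPolynomial (Fin n) K) :
    MvPolynomial (Fin n ⊕ Fin s) K →ₐ[K] MvPolynomial (Fin n) K :=
  MvPolynomial.aeval (Sum.elim MvPolynomial.X g)

theorem aux_one {R : Type*} [CommRing R] {ι : Type*} [Unique ι] [Fintype ι] (P : Ideal R)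
    (hP : P.IsPrime) : MinPrimDecOn P (fun _ : ι => P) Finset.univ := by
  refine ⟨by simp, fun _ _ => hP.isPrimary, fun _ _ _ _ _ => Subsingleton.elim _ _, ?_⟩
  intro i _ hle
  apply hP.ne_top
  rw [eq_top_iff]
  refine le_trans ?_ hle
  refine le_iInf₂ fun j hj => ?_
  exact absurd (Subsingleton.elim j i) (Finset.mem_erase.1 hj).1

theorem aux_loc {R : Type*} [CommRing R] (S : Submonoid R) {ι : Type*} [Fintype ι] (I : Ideal R)
    (Q : ι → Ideal R) (h : MinPrimDecOn I Q Finset.univ) (t : Finset ι)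
    (ht : ∀ i, i ∈ t ↔ Disjoint (S : Set R) (Q i : Set R)) :
    MinPrimDecOn (I.map (algebraMap R (Localization S)))
      (fun i => (Q i).map (algebraMap R (Localization S))) t ∧
    MinPrimDecOn ((I.map (algebraMap R (Localization S))).comap
      (algebraMap R (Localization S))) Q t := by
  obtain ⟨h1, h2, h3, h4⟩ := h
  have hc : ∀ i ∈ t, ((Q i).map (algebraMap R (Localization S))).comap
      (algebraMap R (Localization S)) = Q i := fun i hi =>
    IsLocalization.under_map_of_isPrimary_disjoint S (Localization S)
      (h2 i (Finset.mem_univ i)) ((ht i).1 hi)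
  have htop : ∀ i, i ∉ t → (Q i).map (algebraMap R (Localization S)) = ⊤ := by
    intro i hi
    by_contra hne
    exact hi ((ht i).2
      ((IsLocalization.map_algebraMap_ne_top_iff_disjoint S (Localization S) (Q i)).1 hne))
  have hmapI : I.map (algebraMap R (Localization S)) =
      ⨅ i ∈ t, (Q i).map (algebraMap R (Localization S)) := by
    have e : I.map (algebraMap R (Localization S)) =
        ⨅ i ∈ Finset.univ, (Q i).map (algebraMap R (Localization S)) := by
      rw [h1, ← Finset.inf_eq_iInf, ← Finset.inf_eq_iInf]
      exact map_finset_inf (IsLocalization.mapFrameHom S (Localization S)) _ _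
    rw [e]
    apply le_antisymm
    · exact le_iInf₂ fun i hi => iInf₂_le i (Finset.mem_univ i)
    · refine le_iInf₂ fun i _ => ?_
      by_cases hi : i ∈ t
      · exact iInf₂_le i hi
      · rw [htop i hi]; exact le_top
  have hmin : ∀ i ∈ t, ¬ (⨅ j ∈ t.erase i, Q j) ≤ Q i := by
    intro i hi hle
    refine h4 i (Finset.mem_univ i) (le_trans ?_ hle)
    refine le_iInf₂ fun j hj => iInf₂_le j ?_
    exact Finset.mem_erase.2 ⟨(Finset.mem_erase.1 hj).1, Finset.mem_univ j⟩
  refine ⟨⟨hmapI, ?_, ?_, ?_⟩, ?_, fun i _ => h2 i (Finset.mem_univ i),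
    fun i _ j _ => h3 i (Finset.mem_univ i) j (Finset.mem_univ j), hmin⟩
  · intro i hi
    have hp := Ideal.isPrimary_iff.1 (h2 i (Finset.mem_univ i))
    refine Ideal.isPrimary_iff.2 ⟨(IsLocalization.map_algebraMap_ne_top_iff_disjoint S
      (Localization S) (Q i)).2 ((ht i).1 hi), ?_⟩
    intro x y hxy
    obtain ⟨a, s, rfl⟩ := IsLocalization.exists_mk'_eq S x
    obtain ⟨b, u, rfl⟩ := IsLocalization.exists_mk'_eq S y
    rw [← IsLocalization.mk'_mul, IsLocalization.mk'_mem_iff, ← Ideal.mem_comap, hc i hi] at hxy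
    rw [IsLocalization.mk'_mem_iff, IsLocalization.mk'_mem_iff, ← Ideal.mem_comap,
      ← Ideal.mem_comap, Ideal.comap_radical, hc i hi]
    exact hp.2 hxy
  · intro i hi j hj hij
    apply h3 i (Finset.mem_univ i) j (Finset.mem_univ j)
    have := congrArg (Ideal.comap (algebraMap R (Localization S))) hij
    simpa only [Ideal.comap_radical, hc i hi, hc j hj] using this
  · intro i hi hle
    apply hmin i hi
    have := Ideal.comap_mono (f := algebraMap R (Localization S)) hle
    rw [hc i hi] at this
    refine le_trans ?_ this
    simp only [Ideal.comap_iInf]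
    exact iInf₂_mono fun j hj => (hc j (Finset.mem_erase.1 hj).2).ge
  · rw [hmapI]
    simp only [Ideal.comap_iInf]
    exact iInf_congr fun j => iInf_congr fun hj => hc j hj

theorem aux_max {α : Type*} (lt : α → α → Prop) [IsStrictTotalOrder α lt] (s : Finset α)
    (hs : s.Nonempty) : ∃ m ∈ s, ∀ m' ∈ s, m' ≠ m → lt m' m := by
  induction hs using Finset.Nonempty.cons_induction with
  | singleton a => exact ⟨a, by simp, by simp⟩
  | cons a s ha hs ih =>
    obtain ⟨m, hm, h⟩ := ih
    rcases trichotomous_of lt a m with h1 | h1 | h1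
    · refine ⟨m, by simp [hm], fun m' hm' hne => ?_⟩
      rcases Finset.mem_cons.1 hm' with rfl | h'
      · exact h1
      · exact h m' h' hne
    · exact absurd (h1 ▸ hm) ha
    · refine ⟨a, by simp, fun m' hm' hne => ?_⟩
      rcases Finset.mem_cons.1 hm' with rfl | h'
      · exact absurd rfl hne
      · by_cases e : m' = m
        · exact e ▸ h1
        · exact _root_.trans (h m' h' e) h1

theorem aux_global {σ : Type*} (lt : (σ →₀ ℕ) → (σ →₀ ℕ) → Prop) (hsem : IsSemigroupOrder lt)
    (m : σ →₀ ℕ) : (∀ i, m i ≠ 0 → ¬ IsLocalVar lt i) → m = 0 ∨ lt 0 m := by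
  have := hsem.1
  have hadd : ∀ f g : σ →₀ ℕ, (f = 0 ∨ lt 0 f) → (g = 0 ∨ lt 0 g) → (f + g = 0 ∨ lt 0 (f + g)) := by
    rintro f g (rfl | hf) (rfl | hg)
    · simp
    · simp [hg]
    · simp [hf]
    · right
      have := hsem.2 0 g f hg
      rw [add_zero] at this
      exact _root_.trans hf this
  induction m using Finsupp.induction_linear with
  | zero => simp
  | add f g hf hg =>
    intro h
    exact hadd f g (hf fun i hi => h i (by simp; omega)) (hg fun i hi => h i (by simp; omega))
  | single i k =>
    intro h
    by_cases hk : k = 0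
    · simp [hk]
    have hi : ¬ IsLocalVar lt i := h i (by simpa using hk)
    have h1 : lt 0 (Finsupp.single i 1) := by
      rcases trichotomous_of lt (Finsupp.single i 1) 0 with h1 | h1 | h1
      · exact absurd h1 hi
      · simp at h1
      · exact h1
    clear h hk
    induction k with
    | zero => simp
    | succ k ih =>
      rw [Finsupp.single_add]
      exact hadd _ _ ih (Or.inr h1)

theorem aux_mem {K : Type*} [Field K] {σ : Type*}
    (lt : (σ →₀ ℕ) → (σ →₀ ℕ) → Prop) (hsem : IsSemigroupOrder lt) (f : MvPolynomial σ K) :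
    f ∈ SDen K lt ↔ ∀ m ∈ (f - 1).support, lt m 0 := by
  have := hsem.1
  constructor
  · rintro ⟨g, rfl, h⟩ m hm
    rw [add_sub_cancel_left] at hm
    rcases h with rfl | ⟨m', ⟨h1, h2⟩, h3⟩
    · simp at hm
    · by_cases e : m = m'
      · exact e ▸ h3
      · exact _root_.trans (h2 m hm e) h3
  · intro h
    refine ⟨f - 1, by ring, ?_⟩
    by_cases h0 : f - 1 = 0
    · exact Or.inl h0
    · right
      obtain ⟨m, hm, hm'⟩ := aux_max lt (f - 1).support
        (by rwa [Finset.nonempty_iff_ne_empty, Ne, MvPolynomial.support_eq_empty])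
      exact ⟨m, ⟨hm, hm'⟩, h m hm⟩

theorem aux_disj {K : Type*} [Field K] {σ : Type*}
    (lt : (σ →₀ ℕ) → (σ →₀ ℕ) → Prop) (hsem : IsSemigroupOrder lt) (m : σ →₀ ℕ) (hm : lt 0 m)
    (h : MvPolynomial σ K) : (MvPolynomial.monomial m 1 - 1) * h ∉ SDen K lt := by
  have := hsem.1
  rw [aux_mem lt hsem]
  intro hS
  have irr : ∀ a, ¬ lt a a := fun a => irrefl_of lt a
  have hm0 : m ≠ 0 := by rintro rfl; exact irr _ hm
  have hc : ∀ a, MvPolynomial.coeff (m + a) ((MvPolynomial.monomial m 1 - 1) * h) =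
      MvPolynomial.coeff a h - MvPolynomial.coeff (m + a) h := by
    intro a
    rw [sub_mul, MvPolynomial.coeff_sub, MvPolynomial.coeff_monomial_mul]; simp
  have h0 : MvPolynomial.coeff 0 h ≠ 0 := by
    intro h0
    apply irr 0
    apply hS
    rw [MvPolynomial.mem_support_iff, MvPolynomial.coeff_sub, sub_mul, MvPolynomial.coeff_sub,
      MvPolynomial.coeff_monomial_mul']
    simp [h0, hm0]
  obtain ⟨a, ha, hmax⟩ := aux_max lt h.support ⟨0, MvPolynomial.mem_support_iff.2 h0⟩
  have hlt : lt a (m + a) := by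
    have := hsem.2 0 m a hm
    rwa [add_zero, add_comm] at this
  have hma : MvPolynomial.coeff (m + a) h = 0 := by
    by_contra hne
    have := hmax (m + a) (MvPolynomial.mem_support_iff.2 hne) (by simpa using hm0)
    exact irr _ (_root_.trans this hlt)
  have h0a : lt 0 (m + a) := by
    by_cases e : (0 : σ →₀ ℕ) = a
    · rwa [← e] at hlt ⊢
    · exact _root_.trans (hmax 0 (MvPolynomial.mem_support_iff.2 h0) e) hlt
  have hne : (0 : σ →₀ ℕ) ≠ m + a := by
    intro e; rw [← e] at h0a; exact irr _ h0a
  refine irr 0 (_root_.trans h0a (hS (m + a) ?_))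
  rw [MvPolynomial.mem_support_iff, MvPolynomial.coeff_sub, hc, hma, MvPolynomial.coeff_one,
    if_neg hne, sub_zero, sub_zero]
  exact MvPolynomial.mem_support_iff.1 ha

/-- `lt` is a control order iff for every proper ideal `I` and every minimal
primary decomposition of `I`, localizing at `S` keeps exactly the components `Q i` with
`Q i + ⟨local variables⟩ ≠ A`, both in `S⁻¹A` and after contraction in `A`, and these are
minimal primary decompositions. -/
theorem stmt_1 {K : Type*} [Field K] {n : ℕ}
    (lt : (Fin n →₀ ℕ) → (Fin n →₀ ℕ) → Prop) (hsem : IsSemigroupOrder lt)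
    (loc : Finset (Fin n)) (hloc : ∀ i, i ∈ loc ↔ IsLocalVar lt i)
    (S : Submonoid (MvPolynomial (Fin n) K)) (hS : (S : Set (MvPolynomial (Fin n) K)) = SDen K lt) :
    IsControlOrder lt ↔
      ∀ (I : Ideal (MvPolynomial (Fin n) K)), I ≠ ⊤ →
        ∀ (k : ℕ) (Q : Fin k → Ideal (MvPolynomial (Fin n) K)),
          MinPrimDecOn I Q Finset.univ →
            (MinPrimDecOn (I.map (algebraMap (MvPolynomial (Fin n) K) (Localization S)))
                (fun i => (Q i).map (algebraMap (MvPolynomial (Fin n) K) (Localization S)))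
                (Finset.univ.filter fun i =>
                  Q i ⊔ Ideal.span ((fun j => (MvPolynomial.X j : MvPolynomial (Fin n) K)) ''
                    (loc : Set (Fin n))) ≠ ⊤) ∧
              MinPrimDecOn
                ((I.map (algebraMap (MvPolynomial (Fin n) K) (Localization S))).comap
                  (algebraMap (MvPolynomial (Fin n) K) (Localization S)))
                Q
                (Finset.univ.filter fun i =>
                  Q i ⊔ Ideal.span ((fun j => (MvPolynomial.X j : MvPolynomial (Fin n) K)) ''
                    (loc : Set (Fin n))) ≠ ⊤)) := by
  have := hsem.1
  have hSm : ∀ f, f ∈ S ↔ ∀ m ∈ (f - 1).support, lt m 0 := fun f => by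
    rw [← aux_mem lt hsem, ← hS]; rfl
  constructor
  · intro hctl I _ k Q hQ
    have hJ : ∀ f : MvPolynomial (Fin n) K, f ∈ S ↔ f - 1 ∈ Ideal.span
        ((fun j => (MvPolynomial.X j : MvPolynomial (Fin n) K)) '' (loc : Set (Fin n))) := by
      intro f
      rw [hSm, MvPolynomial.mem_ideal_span_X_image]
      refine forall₂_congr fun m _ => ⟨fun hm => ?_, ?_⟩
      · by_contra hcon
        push Not at hcon
        rcases aux_global lt hsem m (fun i hi hl => hi (hcon i ((hloc i).2 hl))) with e | e
        · exact irrefl_of lt _ (e ▸ hm)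
        · exact irrefl_of lt _ (_root_.trans e hm)
      · rintro ⟨i, hi, h⟩
        exact hctl.2 m ⟨i, (hloc i).1 hi, h⟩
    refine aux_loc S I Q hQ _ fun i => ?_
    rw [Finset.mem_filter, and_iff_right (Finset.mem_univ i), Ne, not_iff_comm,
      Set.not_disjoint_iff, Ideal.eq_top_iff_one, Submodule.mem_sup]
    constructor
    · rintro ⟨s, hs, hq⟩
      refine ⟨s, hq, -(s - 1), neg_mem ((hJ s).1 hs), by ring⟩
    · rintro ⟨q, hq, j, hj, e⟩
      refine ⟨q, (hJ q).2 ?_, hq⟩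
      rw [← e, sub_add_cancel_left]
      exact neg_mem hj
  · intro H
    refine ⟨hsem, ?_⟩
    rintro m ⟨i, hi, hmi⟩
    by_contra hnot
    have hm : lt 0 m := by
      rcases trichotomous_of lt m 0 with h | h | h
      · exact absurd h hnot
      · exact absurd (by simp [h]) hmi
      · exact h
    obtain ⟨P, hP, hIP, hd⟩ := Ideal.exists_le_prime_disjoint
      (Ideal.span {(MvPolynomial.monomial m 1 - 1 : MvPolynomial (Fin n) K)}) S (by
        rw [Set.disjoint_left]
        rintro f hf hfS
        obtain ⟨h, rfl⟩ := Ideal.mem_span_singleton'.1 hf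
        rw [hS, mul_comm] at hfS
        exact aux_disj lt hsem m hm h hfS)
    have hdec : MinPrimDecOn P (fun _ : Fin 1 => P) Finset.univ := aux_one P hP
    have htop : P ⊔ Ideal.span ((fun j => (MvPolynomial.X j : MvPolynomial (Fin n) K)) ''
                    (loc : Set (Fin n))) = ⊤ := by
      rw [Ideal.eq_top_iff_one]
      have h1 : (MvPolynomial.monomial m 1 - 1 : MvPolynomial (Fin n) K) ∈ P :=
        hIP (Ideal.mem_span_singleton_self _)
      have h2 : (MvPolynomial.monomial m 1 : MvPolynomial (Fin n) K) ∈
          Ideal.span ((fun j => (MvPolynomial.X j : MvPolynomial (Fin n) K)) ''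
                    (loc : Set (Fin n))) := by
        rw [MvPolynomial.mem_ideal_span_X_image]
        intro m' hm'
        rw [Finset.mem_singleton.1 (MvPolynomial.support_monomial_subset hm')]
        exact ⟨i, (hloc i).2 hi, hmi⟩
      exact Submodule.mem_sup.2 ⟨_, neg_mem h1, _, h2, by ring⟩
    have := (H P hP.ne_top 1 (fun _ => P) hdec).1.1
    refine (IsLocalization.map_algebraMap_ne_top_iff_disjoint S (Localization S) P).2 hd.symm ?_
    rw [this]
    simp [htop]
end
end

section
/- Let > be a control order on the monomials of A' = K[x₁,…,xₙ,t₁,…,t_s] whose local variables are exactly t₁,…,t_s (so x₁,…,xₙ are global), with multiplicative set S' := {1+g : g = 0 or lt(g) < 1} ⊆ A'. Let I' = Q̃₁ ∩ … ∩ Q̃_k be a minimal primary decomposition of I' in A', numbered so that Q̃_i + ⟨t₁,…,t_s⟩ ≠ A' exactly for i = 1,…,m. Then β(I,J) = φ((S'⁻¹I')^c) = φ(Q̃₁) ∩ … ∩ φ(Q̃_m), and the latter expression is a minimal primary decomposition of β(I,J) in A. -/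
open scoped Classical

noncomputable section

lemma mem_extractionFrom_iff' {R : Type*} [CommRing R] {ι : Type*} (J : Ideal R)
    (Q : ι → Ideal R) (s : Finset ι) (hprim : ∀ i ∈ s, (Q i).IsPrimary) (f : R) :
    f ∈ extractionFrom J Q s ↔ ∃ h ∈ J, (1 + h) * f ∈ ⨅ i ∈ s, Q i := by
  simp only [extractionFrom, Ideal.mem_iInf, Finset.mem_filter, and_imp]
  constructor
  · intro hf
    have key : ∀ t : Finset ι, t ⊆ s → ∃ h ∈ J, ∀ i ∈ t, (1 + h) * f ∈ Q i := by
      intro t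
      induction t using Finset.induction_on with
      | empty => intro _; exact ⟨0, J.zero_mem, by simp⟩
      | insert a t ha ih =>
        intro hs
        obtain ⟨h, hJ, hh⟩ := ih (fun x hx => hs (Finset.mem_insert_of_mem hx))
        by_cases hQ : Q a ⊔ J = ⊤
        · obtain ⟨q, hq, j, hj, hqj⟩ := Submodule.mem_sup.1 ((Ideal.eq_top_iff_one _).1 hQ)
          refine ⟨h + -j + h * -j, ?_, ?_⟩
          · exact J.add_mem (J.add_mem hJ (J.neg_mem hj)) (J.mul_mem_right _ hJ)
          · intro i hi
            have e : (1 + (h + -j + h * -j)) * f = q * ((1 + h) * f) := by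
              have : q = 1 - j := by rw [← hqj]; ring
              rw [this]; ring
            rw [e]
            rcases Finset.mem_insert.1 hi with rfl | hi
            · exact Ideal.mul_mem_right _ _ hq
            · exact Ideal.mul_mem_left _ _ (hh i hi)
        · refine ⟨h, hJ, fun i hi => ?_⟩
          rcases Finset.mem_insert.1 hi with rfl | hi
          · exact Ideal.mul_mem_left _ _ (hf i (hs (Finset.mem_insert_self _ _)) hQ)
          · exact hh i hi
    exact key s subset_rfl
  · rintro ⟨h, hJ, hh⟩ i hi hQ
    have := hh i hi
    rw [mul_comm] at this
    rcases (Ideal.isPrimary_iff.1 (hprim i hi)).2 this with h1 | ⟨n, hn⟩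
    · exact h1
    · exfalso
      apply hQ
      rw [Ideal.eq_top_iff_one]
      have h3 : (1 + h) ^ n - 1 ∈ J := by
        have : (1 + h) - 1 ∣ (1 + h) ^ n - 1 ^ n := sub_dvd_pow_sub_pow _ _ n
        rw [one_pow] at this
        exact J.mem_of_dvd this (by simpa using hJ)
      have e : (1 : R) = (1 + h) ^ n - ((1 + h) ^ n - 1) := by ring
      rw [e]
      exact Ideal.sub_mem _ (Ideal.mem_sup_left hn) (Ideal.mem_sup_right h3)

lemma substHom_rename' {K : Type*} [CommRing K] {n s : ℕ} (g : Fin s → MvPolynomial (Fin n) K)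
    (f : MvPolynomial (Fin n) K) : substHom g (MvPolynomial.rename Sum.inl f) = f := by
  rw [substHom, MvPolynomial.aeval_rename]
  simp [Function.comp_def]

lemma sub_rename_mem' {K : Type*} [CommRing K] {n s : ℕ} (g : Fin s → MvPolynomial (Fin n) K)
    (f : MvPolynomial (Fin n ⊕ Fin s) K) :
    f - MvPolynomial.rename Sum.inl (substHom g f) ∈ Ideal.span (Set.range fun w : Fin s =>
      (MvPolynomial.X (Sum.inr w) : MvPolynomial (Fin n ⊕ Fin s) K) -
        MvPolynomial.rename (Sum.inl : Fin n → Fin n ⊕ Fin s) (g w)) := by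
  induction f using MvPolynomial.induction_on with
  | C a => simp [substHom]
  | add p q hp hq =>
    rw [map_add, map_add, add_sub_add_comm]
    exact Ideal.add_mem _ hp hq
  | mul_X p v hp =>
    have e : p * MvPolynomial.X v - MvPolynomial.rename Sum.inl (substHom g (p * MvPolynomial.X v))
        = (p - MvPolynomial.rename Sum.inl (substHom g p)) * MvPolynomial.X v +
          MvPolynomial.rename Sum.inl (substHom g p) * (MvPolynomial.X v -
            MvPolynomial.rename Sum.inl (substHom g (MvPolynomial.X v))) := by
      rw [map_mul, map_mul]; ring
    rw [e]
    refine Ideal.add_mem _ (Ideal.mul_mem_right _ _ hp) (Ideal.mul_mem_left _ _ ?_)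
    rcases v with v | w
    · simp [substHom]
    · have : substHom g (MvPolynomial.X (Sum.inr w)) = g w := by simp [substHom]
      rw [this]
      exact Ideal.subset_span ⟨w, rfl⟩

lemma mem_liftIdeal_iff' {K : Type*} [CommRing K] {n s : ℕ} (g : Fin s → MvPolynomial (Fin n) K)
    (W : Ideal (MvPolynomial (Fin n) K)) (f : MvPolynomial (Fin n ⊕ Fin s) K) :
    f ∈ liftIdeal g W ↔ substHom g f ∈ W := by
  constructor
  · intro h
    have : liftIdeal g W ≤ W.comap (substHom g) := by
      refine sup_le (Ideal.map_le_iff_le_comap.2 ?_) (Ideal.span_le.2 ?_)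
      · intro x hx
        change substHom g (MvPolynomial.rename Sum.inl x) ∈ W
        rwa [substHom_rename']
      · rintro _ ⟨w, rfl⟩
        change substHom g _ ∈ W
        rw [map_sub, substHom_rename']
        simp [substHom]
    exact this h
  · intro h
    have e : f = MvPolynomial.rename Sum.inl (substHom g f) +
      (f - MvPolynomial.rename Sum.inl (substHom g f)) := by ring
    rw [e]
    exact Ideal.add_mem _ (Ideal.mem_sup_left (Ideal.mem_map_of_mem
      (MvPolynomial.rename (Sum.inl : Fin n → Fin n ⊕ Fin s)).toRingHom h))
      (Ideal.mem_sup_right (sub_rename_mem' g f))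

lemma exists_leading' {α : Type*}
    (lt : α → α → Prop) (h : IsStrictTotalOrder α lt) (S : Finset α) (hS : S.Nonempty) : ∃ m ∈ S, ∀ m' ∈ S, m' ≠ m → lt m' m := by
  let _ := linearOrderOfSTO lt
  obtain ⟨m, hm, hmax⟩ := S.exists_max_image id hS
  exact ⟨m, hm, fun m' hm' hne => lt_of_le_of_ne (hmax m' hm') hne⟩

lemma mem_SDen_iff' {K : Type*} [Field K] {n s : ℕ}
    (lt : ((Fin n ⊕ Fin s) →₀ ℕ) → ((Fin n ⊕ Fin s) →₀ ℕ) → Prop)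
    (hctrl : IsControlOrder lt)
    (hloc : ∀ v : Fin n ⊕ Fin s, IsLocalVar lt v ↔ ∃ w : Fin s, v = Sum.inr w)
    (f : MvPolynomial (Fin n ⊕ Fin s) K) :
    f ∈ SDen K lt ↔ ∃ h ∈ Ideal.span (Set.range fun w : Fin s =>
      (MvPolynomial.X (Sum.inr w) : MvPolynomial (Fin n ⊕ Fin s) K)), f = 1 + h := by
  obtain ⟨⟨hsto, hadd⟩, hc⟩ := hctrl
  have hr : (Set.range fun w : Fin s =>
      (MvPolynomial.X (Sum.inr w) : MvPolynomial (Fin n ⊕ Fin s) K)) =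
      MvPolynomial.X '' (Set.range Sum.inr) := by
    rw [← Set.range_comp]; rfl
  have hirr : ∀ a, ¬ lt a a := fun a => hsto.toIsStrictOrder.toIrrefl.irrefl a
  have htr : ∀ a b c, lt a b → lt b c → lt a c :=
    fun a b c => hsto.toIsStrictOrder.toIsTrans.trans a b c
  have htri : ∀ a b, lt a b ∨ a = b ∨ lt b a := fun a b => by
    by_contra hcon
    push Not at hcon
    exact hcon.2.1 (hsto.toTrichotomous.trichotomous a b hcon.1 hcon.2.2)
  have hglob : ∀ m : (Fin n ⊕ Fin s) →₀ ℕ, (∀ w, m (Sum.inr w) = 0) → ¬ lt m 0 := by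
    have hle : ∀ m : (Fin n ⊕ Fin s) →₀ ℕ, (∀ w, m (Sum.inr w) = 0) → m = 0 ∨ lt 0 m := by
      intro m
      induction m using Finsupp.induction_linear with
      | zero => intro _; exact Or.inl rfl
      | add p q hp hq =>
        intro h
        have h1 := hp fun w => by have := h w; simp at this; exact this.1
        have h2 := hq fun w => by have := h w; simp at this; exact this.2
        rcases h2 with rfl | h2
        · simpa using h1
        · right
          have h3 := hadd _ _ p h2
          rw [add_zero] at h3
          rcases h1 with rfl | h1
          · exact h3
          · exact htr _ _ _ h1 h3
      | single v k =>
        intro h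
        rcases v with v | w
        · induction k with
          | zero => left; simp
          | succ k ih =>
            right
            have h1 : lt 0 (Finsupp.single (Sum.inl v) 1) := by
              rcases htri 0 (Finsupp.single (Sum.inl v : Fin n ⊕ Fin s) 1) with h | h | h
              · exact h
              · have := DFunLike.congr_fun h (Sum.inl v)
                simp at this
              · obtain ⟨w, hw⟩ := (hloc (Sum.inl v)).1 h
                cases hw
            have h3 := hadd _ _ (Finsupp.single (Sum.inl v) k) h1
            rw [add_zero, ← Finsupp.single_add] at h3
            rcases ih (by simp) with h4 | h4
            · rwa [h4] at h3
            · exact htr _ _ _ h4 h3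
        · left
          have := h w
          simp at this
          simp [this]
    intro m hm hlt
    rcases hle m hm with rfl | h
    · exact hirr _ hlt
    · exact hirr _ (htr _ _ _ h hlt)
  rw [hr]
  simp only [MvPolynomial.mem_ideal_span_X_image]
  constructor
  · rintro ⟨h, rfl, h0⟩
    refine ⟨h, ?_, rfl⟩
    rcases h0 with rfl | ⟨m, ⟨hm, hmax⟩, hm0⟩
    · simp
    · intro m' hm'
      have : lt m' 0 := by
        by_cases e : m' = m
        · rw [e]; exact hm0
        · exact htr _ _ _ (hmax m' hm' e) hm0
      by_contra hcon
      push Not at hcon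
      exact hglob m' (fun w => hcon _ ⟨w, rfl⟩) this
  · rintro ⟨h, hh, rfl⟩
    refine ⟨h, rfl, ?_⟩
    by_cases h0 : h = 0
    · exact Or.inl h0
    · right
      obtain ⟨m, hm, hmax⟩ := exists_leading' lt hsto h.support
        (MvPolynomial.support_nonempty.2 h0)
      refine ⟨m, ⟨hm, hmax⟩, hc m ?_⟩
      obtain ⟨_, ⟨w, rfl⟩, hw⟩ := hh m hm
      exact ⟨_, (hloc _).2 ⟨w, rfl⟩, hw⟩

/-- for a control order on `A' = K[x,t]` whose local variables are exactly the
`t`'s, the extraction `β(I,J)` equals `φ((S'⁻¹I')^c)`, equals the intersection of the images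
`φ(Q̃ i)` over the components of `I'` with `Q̃ i + ⟨t₁,…,t_s⟩ ≠ A'`, and the latter is a
minimal primary decomposition of `β(I,J)` in `A`. -/
theorem stmt_7 {K : Type*} [Field K] {n s : ℕ}
    (lt : ((Fin n ⊕ Fin s) →₀ ℕ) → ((Fin n ⊕ Fin s) →₀ ℕ) → Prop)
    (hctrl : IsControlOrder lt)
    (hloc : ∀ v : Fin n ⊕ Fin s, IsLocalVar lt v ↔ ∃ w : Fin s, v = Sum.inr w)
    (S' : Submonoid (MvPolynomial (Fin n ⊕ Fin s) K))
    (hS' : (S' : Set (MvPolynomial (Fin n ⊕ Fin s) K)) = SDen K lt)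
    (I J : Ideal (MvPolynomial (Fin n) K)) (hI : I ≠ ⊤) (hJ : J ≠ ⊤)
    (g : Fin s → MvPolynomial (Fin n) K) (hJg : J = Ideal.span (Set.range g))
    (k : ℕ) (Qt : Fin k → Ideal (MvPolynomial (Fin n ⊕ Fin s) K))
    (hdec : MinPrimDecOn (liftIdeal g I) Qt Finset.univ)
    (k' : ℕ) (Qd : Fin k' → Ideal (MvPolynomial (Fin n) K))
    (hQd : MinPrimDecOn I Qd Finset.univ)
    (T : Ideal (MvPolynomial (Fin n ⊕ Fin s) K))
    (hT : T = Ideal.span (Set.range fun w : Fin s =>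
      (MvPolynomial.X (Sum.inr w) : MvPolynomial (Fin n ⊕ Fin s) K))) :
    extractionFrom J Qd Finset.univ =
        Ideal.map (substHom g)
          (((liftIdeal g I).map
              (algebraMap (MvPolynomial (Fin n ⊕ Fin s) K) (Localization S'))).comap
            (algebraMap (MvPolynomial (Fin n ⊕ Fin s) K) (Localization S'))) ∧
      extractionFrom J Qd Finset.univ =
        (⨅ i ∈ Finset.univ.filter (fun i => Qt i ⊔ T ≠ ⊤), Ideal.map (substHom g) (Qt i)) ∧
      MinPrimDecOn (extractionFrom J Qd Finset.univ)
        (fun i => Ideal.map (substHom g) (Qt i))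
        (Finset.univ.filter fun i => Qt i ⊔ T ≠ ⊤) := by
  have hsurj : Function.Surjective (substHom g) := fun f => ⟨_, substHom_rename' g f⟩
  have hle : ∀ i, liftIdeal g I ≤ Qt i := by
    intro i
    rw [hdec.1]
    exact iInf₂_le i (Finset.mem_univ i)
  have hker : ∀ i, ∀ f, substHom g f = 0 → f ∈ Qt i := by
    intro i f hf
    apply hle i
    rw [mem_liftIdeal_iff', hf]
    exact I.zero_mem
  have hmem : ∀ i, ∀ f, substHom g f ∈ Ideal.map (substHom g) (Qt i) ↔ f ∈ Qt i := by
    intro i f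
    constructor
    · intro h
      obtain ⟨x, hx, hxf⟩ := (Ideal.mem_map_iff_of_surjective _ hsurj).1 h
      have : f = x + (f - x) := by ring
      rw [this]
      exact Ideal.add_mem _ hx (hker i _ (by rw [map_sub, hxf, sub_self]))
    · exact fun h => Ideal.mem_map_of_mem _ h
  have hrad : ∀ i, ∀ f, substHom g f ∈ (Ideal.map (substHom g) (Qt i)).radical ↔
      f ∈ (Qt i).radical := by
    intro i f
    simp only [Ideal.mem_radical_iff, ← map_pow, hmem]
  have hprim : ∀ i, (Ideal.map (substHom g) (Qt i)).IsPrimary := by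
    intro i
    have h0 := Ideal.isPrimary_iff.1 (hdec.2.1 i (Finset.mem_univ i))
    rw [Ideal.isPrimary_iff]
    constructor
    · intro h
      apply h0.1
      rw [Ideal.eq_top_iff_one, ← hmem, h]
      trivial
    · intro x y
      obtain ⟨x, rfl⟩ := hsurj x
      obtain ⟨y, rfl⟩ := hsurj y
      rw [← map_mul, hmem, hmem, hrad]
      exact h0.2
  have hTJ : Ideal.map (substHom g) T = J := by
    rw [hT, hJg, Ideal.map_span, ← Set.range_comp]
    congr 2
    ext w
    simp [substHom]
  have htop : ∀ i, Ideal.map (substHom g) (Qt i) ⊔ J = ⊤ ↔ Qt i ⊔ T = ⊤ := by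
    intro i
    rw [← hTJ, ← Ideal.map_sup]
    constructor
    · intro h
      have h1 : (1 : MvPolynomial (Fin n) K) ∈ Ideal.map (substHom g) (Qt i ⊔ T) := by
        rw [h]; trivial
      obtain ⟨x, hx, hx1⟩ := (Ideal.mem_map_iff_of_surjective _ hsurj).1 h1
      rw [Ideal.eq_top_iff_one]
      have : (1 : MvPolynomial (Fin n ⊕ Fin s) K) = x + (1 - x) := by ring
      rw [this]
      exact Ideal.add_mem _ hx (Ideal.mem_sup_left (hker i _ (by rw [map_sub, hx1, map_one, sub_self])))
    · intro h
      rw [h, Ideal.map_top]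
  have hinf : ∀ u : Finset (Fin k), ∀ f, substHom g f ∈
      (⨅ i ∈ u, Ideal.map (substHom g) (Qt i)) ↔ f ∈ ⨅ i ∈ u, Qt i := by
    intro u f
    simp only [Ideal.mem_iInf, hmem]
  have hI' : I = ⨅ i ∈ Finset.univ, Ideal.map (substHom g) (Qt i) := by
    ext x
    obtain ⟨x, rfl⟩ := hsurj x
    rw [hinf, ← hdec.1, mem_liftIdeal_iff']
  have hfil : (Finset.univ.filter fun i => Qt i ⊔ T ≠ ⊤) =
      Finset.univ.filter fun i => Ideal.map (substHom g) (Qt i) ⊔ J ≠ ⊤ := by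
    ext i
    simp [htop]
  have hE : ∀ f, f ∈ extractionFrom J Qd Finset.univ ↔ ∃ h ∈ J, (1 + h) * f ∈ I := by
    intro f
    rw [mem_extractionFrom_iff' J Qd _ hQd.2.1, ← hQd.1]
  have h2 : extractionFrom J Qd Finset.univ =
        (⨅ i ∈ Finset.univ.filter (fun i => Qt i ⊔ T ≠ ⊤), Ideal.map (substHom g) (Qt i)) := by
    rw [hfil]
    change _ = extractionFrom J (fun i => Ideal.map (substHom g) (Qt i)) Finset.univ
    ext f
    rw [hE, mem_extractionFrom_iff' J _ _ (fun i _ => hprim i), ← hI']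
  refine ⟨?_, h2, h2, fun i _ => hprim i, ?_, ?_⟩
  · have hS : ∀ f, f ∈ S' ↔ ∃ h ∈ T, f = 1 + h := by
      intro f
      rw [hT, ← mem_SDen_iff' lt hctrl hloc, ← hS']
      rfl
    ext f
    rw [hE, Ideal.mem_map_iff_of_surjective _ hsurj]
    simp only [Ideal.mem_comap, IsLocalization.algebraMap_mem_map_algebraMap_iff S',
      mem_liftIdeal_iff']
    constructor
    · rintro ⟨h, hh, hf⟩
      obtain ⟨f, rfl⟩ := hsurj f
      rw [← hTJ] at hh
      obtain ⟨x, hx, rfl⟩ := (Ideal.mem_map_iff_of_surjective _ hsurj).1 hh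
      refine ⟨f, ⟨1 + x, (hS _).2 ⟨x, hx, rfl⟩, ?_⟩, rfl⟩
      rwa [map_mul, map_add, map_one]
    · rintro ⟨x, ⟨m, hm, hmx⟩, rfl⟩
      obtain ⟨h, hh, rfl⟩ := (hS m).1 hm
      refine ⟨substHom g h, ?_, ?_⟩
      · rw [← hTJ]
        exact Ideal.mem_map_of_mem _ hh
      · rwa [map_mul, map_add, map_one] at hmx
  · intro i _ j _ hij
    apply hdec.2.2.1 i (Finset.mem_univ i) j (Finset.mem_univ j)
    ext f
    rw [← hrad, ← hrad]
    exact Ideal.ext_iff.1 hij _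
  · intro i _ hcon
    apply hdec.2.2.2 i (Finset.mem_univ i)
    intro f hf
    rw [← hmem]
    apply hcon
    rw [hinf]
    simp only [Ideal.mem_iInf, Finset.mem_erase] at hf ⊢
    intro j hj
    exact hf j ⟨hj.1, Finset.mem_univ j⟩
end
end

section
/- Let > be a control order on the monomials of A' = K[x₁,…,xₙ,t₁,…,t_s] whose local variables are exactly t₁,…,t_s, with multiplicative set S' := {1+g : g = 0 or lt(g) < 1} ⊆ A'. Then the Krull dimension of A / β(I,J) equals the Krull dimension of S'⁻¹A' / S'⁻¹I'. -/
open scoped Classical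

noncomputable section

theorem aux_height_max {K : Type*} [Field K] : ∀ (n : ℕ) (M : Ideal (MvPolynomial (Fin n) K))
    [M.IsMaximal], M.height = n := by
  intro n
  induction n with
  | zero =>
    intro M hM
    have h1 := Ideal.height_le_ringKrullDim_of_isPrime (I := M)
    rw [MvPolynomial.ringKrullDim_of_isNoetherianRing, ringKrullDim_eq_zero_of_field] at h1
    simp only [Nat.card_eq_fintype_card, Fintype.card_fin] at h1
    have h2 : M.height ≤ 0 := by exact_mod_cast h1
    simpa using le_antisymm h2 (zero_le)
  | succ n ih =>
    intro M hM
    let e := (MvPolynomial.finSuccEquiv K n).toRingEquiv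
    let P : Ideal (Polynomial (MvPolynomial (Fin n) K)) := M.comap e.symm
    have hP : P.IsMaximal := Ideal.comap_isMaximal_of_equiv e.symm
    have h1 : P.height = M.height := RingEquiv.height_comap e.symm M
    have hmax : (P.under (MvPolynomial (Fin n) K)).IsMaximal :=
      Polynomial.isMaximal_comap_C_of_isJacobsonRing P
    have hlo : P.LiesOver (P.under (MvPolynomial (Fin n) K)) := ⟨rfl⟩
    rw [← h1, Polynomial.height_eq_height_add_one (P.under (MvPolynomial (Fin n) K)) P, ih]
    push_cast
    rfl

theorem aux_dim_le_height {K : Type*} [Field K] {n : ℕ} (p : Ideal (MvPolynomial (Fin n) K))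
    [hp : p.IsPrime] (M : Ideal (MvPolynomial (Fin n) K ⧸ p)) [M.IsMaximal] :
    ringKrullDim (MvPolynomial (Fin n) K ⧸ p) ≤ M.height := by
  obtain ⟨d, -, f, hinj, hint⟩ := exists_integral_inj_algHom_of_quotient p hp.ne_top
  letI : Algebra (MvPolynomial (Fin d) K) (MvPolynomial (Fin n) K ⧸ p) := f.toRingHom.toAlgebra
  haveI : Algebra.IsIntegral (MvPolynomial (Fin d) K) (MvPolynomial (Fin n) K ⧸ p) := ⟨hint⟩
  haveI : FaithfulSMul (MvPolynomial (Fin d) K) (MvPolynomial (Fin n) K ⧸ p) :=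
    (faithfulSMul_iff_algebraMap_injective _ _).mpr hinj
  have hgd : Algebra.HasGoingDown (MvPolynomial (Fin d) K) (MvPolynomial (Fin n) K ⧸ p) :=
    inferInstance
  have hmax : (M.under (MvPolynomial (Fin d) K)).IsMaximal :=
    Ideal.isMaximal_comap_of_isIntegral_of_isMaximal M
  have h1 := Ideal.height_eq_height_add_of_liesOver_of_hasGoingDown
    (M.under (MvPolynomial (Fin d) K)) M
  rw [aux_height_max] at h1
  have h2 : (d : ℕ∞) ≤ M.height := by rw [h1]; exact le_self_add
  have h3 : ringKrullDim (MvPolynomial (Fin n) K ⧸ p) ≤ ringKrullDim (MvPolynomial (Fin d) K) := by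
    refine Order.krullDim_le_of_strictMono (PrimeSpectrum.comap
      (algebraMap (MvPolynomial (Fin d) K) (MvPolynomial (Fin n) K ⧸ p))) ?_
    intro a b hab
    exact Ideal.IsIntegral.comap_lt_comap (R := MvPolynomial (Fin d) K) (I := a.asIdeal)
      (J := b.asIdeal) hab
  refine h3.trans ?_
  rw [MvPolynomial.ringKrullDim_of_isNoetherianRing, ringKrullDim_eq_zero_of_field]
  simpa using (WithBot.coe_le_coe.mpr h2)

/-- Primes over `I` meeting `V(J)`. -/
def AuxX {R : Type*} [CommRing R] (I J : Ideal R) : Type _ :=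
  {P : PrimeSpectrum R // I ≤ P.asIdeal ∧ P.asIdeal ⊔ J ≠ ⊤}

instance {R : Type*} [CommRing R] (I J : Ideal R) : PartialOrder (AuxX I J) :=
  inferInstanceAs (PartialOrder {P : PrimeSpectrum R // I ≤ P.asIdeal ∧ P.asIdeal ⊔ J ≠ ⊤})

theorem aux_inf {R : Type*} [CommRing R] {ι : Type*} (t : Finset ι) (Q : ι → Ideal R)
    {P : Ideal R} (hP : P.IsPrime) (h : (⨅ i ∈ t, Q i) ≤ P) : ∃ i ∈ t, Q i ≤ P := by
  rwa [← Finset.inf_eq_iInf, hP.inf_le'] at h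

theorem aux_dimA {K : Type*} [Field K] {n : ℕ}
    (I J : Ideal (MvPolynomial (Fin n) K))
    (k : ℕ) (Qd : Fin k → Ideal (MvPolynomial (Fin n) K))
    (hQd : MinPrimDecOn I Qd Finset.univ) :
    ringKrullDim (MvPolynomial (Fin n) K ⧸ extractionFrom J Qd Finset.univ) =
      Order.krullDim (AuxX I J) := by
  obtain ⟨hI, hprim, -, -⟩ := hQd
  rw [ringKrullDim_quotient]
  apply le_antisymm
  · rw [Order.krullDim_eq_iSup_coheight]
    refine iSup_le fun a => ?_
    have ha : extractionFrom J Qd Finset.univ ≤ a.1.asIdeal := a.2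
    obtain ⟨i, hi, hia⟩ := aux_inf _ _ a.1.isPrime ha
    have hiJ : Qd i ⊔ J ≠ ⊤ := by simpa using hi
    have hp : (Qd i).radical.IsPrime := Ideal.isPrime_radical (hprim i (Finset.mem_univ _))
    obtain ⟨m, hm, hle⟩ := Ideal.exists_le_maximal _ hiJ
    have hpm : (Qd i).radical ≤ m := by
      rw [hm.isPrime.radical_le_iff]; exact le_sup_left.trans hle
    have hIp : I ≤ (Qd i).radical := by
      rw [hI]
      exact (iInf₂_le i (Finset.mem_univ _)).trans Ideal.le_radical
    have hpa : (Qd i).radical ≤ a.1.asIdeal := by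
      rw [a.1.isPrime.radical_le_iff]; exact hia
    rw [Order.coheight_eq_krullDim_Ici]
    have s1 : Order.krullDim (Set.Ici a) ≤
        ringKrullDim (MvPolynomial (Fin n) K ⧸ (Qd i).radical) := by
      rw [ringKrullDim_quotient]
      exact Order.krullDim_le_of_strictMono
        (fun b => ⟨b.1.1, hpa.trans (show a.1.asIdeal ≤ b.1.1.asIdeal from b.2)⟩)
        (fun b c hbc => hbc)
    have hker : RingHom.ker (Ideal.Quotient.mk (Qd i).radical) ≤ m := by
      rwa [Ideal.mk_ker]
    have hM : (m.map (Ideal.Quotient.mk (Qd i).radical)).IsMaximal :=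
      .map_of_surjective_of_ker_le Ideal.Quotient.mk_surjective hker
    have hcm : (m.map (Ideal.Quotient.mk (Qd i).radical)).comap
        (Ideal.Quotient.mk (Qd i).radical) = m := by
      rw [Ideal.comap_map_of_surjective' _ Ideal.Quotient.mk_surjective, sup_eq_left]
      exact hker
    refine s1.trans ((aux_dim_le_height _ (m.map (Ideal.Quotient.mk (Qd i).radical))).trans ?_)
    rw [PrimeSpectrum.height_eq_orderHeight ⟨_, hM.isPrime⟩, Order.height_eq_krullDim_Iic]
    refine Order.krullDim_le_of_strictMono
      (fun b => ⟨PrimeSpectrum.comap (Ideal.Quotient.mk (Qd i).radical) b.1, ?_, ?_⟩) ?_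
    · refine hIp.trans fun x hx => ?_
      have : Ideal.Quotient.mk (Qd i).radical x = 0 := Ideal.Quotient.eq_zero_iff_mem.mpr hx
      simp [this]
    · have hb : b.1.asIdeal ≤ m.map (Ideal.Quotient.mk (Qd i).radical) := b.2
      have h1 : b.1.asIdeal.comap (Ideal.Quotient.mk (Qd i).radical) ≤ m :=
        (Ideal.comap_mono hb).trans hcm.le
      intro htop
      apply hm.ne_top
      rw [eq_top_iff, ← htop]
      exact sup_le h1 (le_sup_right.trans hle)
    · intro b c hbc
      exact RingHom.strictMono_comap_of_surjective Ideal.Quotient.mk_surjective hbc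
  · refine Order.krullDim_le_of_strictMono (fun P => ⟨P.1, ?_⟩) (fun b c hbc => hbc)
    have h1 := P.2.1
    obtain ⟨i, -, hi⟩ := aux_inf _ _ P.1.isPrime (hI.symm.le.trans h1)
    have hmem : i ∈ Finset.univ.filter (fun i => Qd i ⊔ J ≠ ⊤) := by
      simp only [Finset.mem_filter, Finset.mem_univ, true_and]
      intro htop
      apply P.2.2
      exact top_le_iff.1 (htop.symm.le.trans (sup_le_sup_right hi J))
    have h2 : extractionFrom J Qd Finset.univ ≤ Qd i := iInf₂_le i hmem
    exact h2.trans hi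

theorem aux_lt_zero {σ : Type*} (lt : (σ →₀ ℕ) → (σ →₀ ℕ) → Prop) (h : IsSemigroupOrder lt)
    (m : σ →₀ ℕ) (hm : ∀ i, IsLocalVar lt i → m i = 0) : m = 0 ∨ lt 0 m := by
  obtain ⟨hst, hadd⟩ := h
  haveI := hst
  have key : ∀ a b, (a = 0 ∨ lt 0 a) → (b = 0 ∨ lt 0 b) → (a + b = 0 ∨ lt 0 (a + b)) := by
    rintro a b (rfl | ha) (rfl | hb)
    · simp
    · simpa using Or.inr hb
    · simpa using Or.inr ha
    · right
      have h1 := hadd _ _ a hb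
      rw [add_zero] at h1
      exact _root_.trans ha h1
  induction m using Finsupp.induction_linear with
  | zero => simp
  | add a b iha ihb =>
    apply key
    · exact iha fun i hi => by have := hm i hi; simp at this; exact this.1
    · exact ihb fun i hi => by have := hm i hi; simp at this; exact this.2
  | single i k =>
    by_cases hi : IsLocalVar lt i
    · have := hm i hi
      simp at this
      simp [this]
    · clear hm
      have h1 : lt 0 (Finsupp.single i 1) := by
        rcases trichotomous_of lt (Finsupp.single i 1) 0 with h | h | h
        · exact absurd h hi
        · simp at h
        · exact h
      induction k with
      | zero => simp
      | succ k ih =>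
        rw [Finsupp.single_add]
        exact key _ _ ih (Or.inr h1)

theorem aux_SDen {K : Type*} [Field K] {n s : ℕ}
    (lt : ((Fin n ⊕ Fin s) →₀ ℕ) → ((Fin n ⊕ Fin s) →₀ ℕ) → Prop)
    (hctrl : IsControlOrder lt)
    (hloc : ∀ v : Fin n ⊕ Fin s, IsLocalVar lt v ↔ ∃ w : Fin s, v = Sum.inr w)
    (f : MvPolynomial (Fin n ⊕ Fin s) K) :
    1 + f ∈ SDen K lt ↔ f ∈ Ideal.span (MvPolynomial.X '' (Set.range Sum.inr)) := by
  obtain ⟨hsg, hc⟩ := hctrl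
  haveI := hsg.1
  rw [MvPolynomial.mem_ideal_span_X_image]
  constructor
  · rintro ⟨h, hfh, h1⟩ m hm
    obtain rfl : f = h := add_left_cancel hfh
    rcases h1 with rfl | ⟨m', hm', hlt⟩
    · simp at hm
    · have h2 : lt m 0 := by
        by_cases hmm : m = m'
        · exact hmm ▸ hlt
        · exact _root_.trans (hm'.2 m hm hmm) hlt
      by_contra hcon
      push Not at hcon
      rcases aux_lt_zero lt hsg m (fun i hi => by
        obtain ⟨w, rfl⟩ := (hloc i).1 hi
        exact hcon _ ⟨w, rfl⟩) with h3 | h3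
      · subst h3; exact irrefl _ h2
      · exact irrefl _ (_root_.trans h2 h3)
  · intro h
    refine ⟨f, rfl, ?_⟩
    by_cases hf : f = 0
    · exact Or.inl hf
    right
    have hne : f.support.Nonempty := MvPolynomial.support_nonempty.mpr hf
    obtain ⟨m, hm, hmax⟩ : ∃ m ∈ f.support, ∀ m' ∈ f.support, m' ≠ m → lt m' m := by
      have : ∀ S : Finset ((Fin n ⊕ Fin s) →₀ ℕ), S.Nonempty →
          ∃ m ∈ S, ∀ m' ∈ S, m' ≠ m → lt m' m := by
        intro S hS
        induction hS using Finset.Nonempty.cons_induction with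
        | singleton a => exact ⟨a, by simp, by simp⟩
        | cons a S ha hS ih =>
          obtain ⟨m, hm, hmax⟩ := ih
          rcases trichotomous_of lt a m with h | h | h
          · refine ⟨m, by simp [hm], fun m' hm' hne => ?_⟩
            rcases Finset.mem_cons.1 hm' with rfl | h'
            · exact h
            · exact hmax _ h' hne
          · exact absurd (h ▸ hm) ha
          · refine ⟨a, by simp, fun m' hm' hne => ?_⟩
            rcases Finset.mem_cons.1 hm' with rfl | h'
            · exact absurd rfl hne
            · by_cases hmm : m' = m
              · exact hmm ▸ h
              · exact _root_.trans (hmax _ h' hmm) h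
      exact this _ hne
    obtain ⟨i, ⟨w, rfl⟩, hi⟩ := h m hm
    exact ⟨m, ⟨hm, hmax⟩, hc m ⟨_, (hloc _).2 ⟨w, rfl⟩, hi⟩⟩

theorem aux_subst_surj {K : Type*} [Field K] {n s : ℕ} (g : Fin s → MvPolynomial (Fin n) K)
    (a : MvPolynomial (Fin n) K) :
    substHom g (MvPolynomial.rename Sum.inl a) = a := by
  unfold substHom
  rw [MvPolynomial.aeval_rename]
  have : (Sum.elim MvPolynomial.X g) ∘ Sum.inl = (MvPolynomial.X : Fin n → _) := by
    ext i; simp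
  rw [this]
  simp

theorem aux_sub_mem {K : Type*} [Field K] {n s : ℕ} (g : Fin s → MvPolynomial (Fin n) K)
    (I : Ideal (MvPolynomial (Fin n) K)) (f : MvPolynomial (Fin n ⊕ Fin s) K) :
    f - MvPolynomial.rename Sum.inl (substHom g f) ∈ liftIdeal g I := by
  rw [← Ideal.Quotient.eq]
  have : (Ideal.Quotient.mkₐ K (liftIdeal g I)) =
      ((Ideal.Quotient.mkₐ K (liftIdeal g I)).comp (MvPolynomial.rename Sum.inl)).comp
        (substHom g) := by
    apply MvPolynomial.algHom_ext
    rintro (i | w)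
    · simp [substHom]
    · simp only [substHom, AlgHom.comp_apply, MvPolynomial.aeval_X, Sum.elim_inr]
      refine Ideal.Quotient.eq.mpr (Ideal.mem_sup_right (Ideal.subset_span ⟨w, rfl⟩))
  exact DFunLike.congr_fun this f

theorem aux_lift_le {K : Type*} [Field K] {n s : ℕ} (g : Fin s → MvPolynomial (Fin n) K)
    (I P : Ideal (MvPolynomial (Fin n) K)) (h : I ≤ P) :
    liftIdeal g I ≤ P.comap (substHom g) := by
  refine sup_le ?_ ?_
  · rw [Ideal.map_le_iff_le_comap]
    intro x hx
    have := aux_subst_surj g x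
    simp only [Ideal.mem_comap]
    exact (show substHom g (MvPolynomial.rename Sum.inl x) ∈ P from this.symm ▸ h hx)
  · rw [Ideal.span_le]
    rintro _ ⟨w, rfl⟩
    simp only [SetLike.mem_coe, Ideal.mem_comap, map_sub, aux_subst_surj]
    simp [substHom]

theorem aux_map_span {K : Type*} [Field K] {n s : ℕ} (g : Fin s → MvPolynomial (Fin n) K) :
    (Ideal.span (MvPolynomial.X '' (Set.range (Sum.inr : Fin s → Fin n ⊕ Fin s)))).map
      (substHom g) = Ideal.span (Set.range g) := by
  rw [Ideal.map_span, ← Set.range_comp, ← Set.range_comp]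
  congr 2
  ext w
  simp [substHom]

theorem aux_dimB {K : Type*} [Field K] {n s : ℕ}
    (lt : ((Fin n ⊕ Fin s) →₀ ℕ) → ((Fin n ⊕ Fin s) →₀ ℕ) → Prop)
    (hctrl : IsControlOrder lt)
    (hloc : ∀ v : Fin n ⊕ Fin s, IsLocalVar lt v ↔ ∃ w : Fin s, v = Sum.inr w)
    (S' : Submonoid (MvPolynomial (Fin n ⊕ Fin s) K))
    (hS' : (S' : Set (MvPolynomial (Fin n ⊕ Fin s) K)) = SDen K lt)
    (I J : Ideal (MvPolynomial (Fin n) K))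
    (g : Fin s → MvPolynomial (Fin n) K) (hJg : J = Ideal.span (Set.range g)) :
    ringKrullDim (Localization S' ⧸ (liftIdeal g I).map
        (algebraMap (MvPolynomial (Fin n ⊕ Fin s) K) (Localization S'))) =
      Order.krullDim (AuxX I J) := by
  have hsurj : Function.Surjective (substHom g) := fun a => ⟨_, aux_subst_surj g a⟩
  have hmem : ∀ f, 1 + f ∈ S' ↔
      f ∈ Ideal.span (MvPolynomial.X '' (Set.range (Sum.inr : Fin s → Fin n ⊕ Fin s))) := by
    intro f
    rw [← aux_SDen lt hctrl hloc, ← hS', SetLike.mem_coe]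
  have hdisj : ∀ P : AuxX I J, Disjoint (S' : Set (MvPolynomial (Fin n ⊕ Fin s) K))
      (P.1.asIdeal.comap (substHom g) : Ideal _) := by
    intro P
    rw [Set.disjoint_left]
    intro f hf hfP
    have h1 : f - 1 ∈ _ := (hmem (f - 1)).1 (by simpa using hf)
    have h2 := Ideal.mem_map_of_mem (substHom g) h1
    rw [aux_map_span, ← hJg] at h2
    apply P.2.2
    rw [Ideal.eq_top_iff_one]
    have h3 : substHom g f ∈ P.1.asIdeal := hfP
    have h4 : (1 : MvPolynomial (Fin n) K) = substHom g f - substHom g (f - 1) := by simp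
    rw [h4]
    exact Ideal.sub_mem _ (Ideal.mem_sup_left h3) (Ideal.mem_sup_right h2)
  rw [ringKrullDim_quotient]
  apply le_antisymm
  · have hle : ∀ q : PrimeSpectrum.zeroLocus (((liftIdeal g I).map
        (algebraMap (MvPolynomial (Fin n ⊕ Fin s) K) (Localization S')) : Ideal (Localization S')) : Set (Localization S')),
        liftIdeal g I ≤ q.1.asIdeal.under (MvPolynomial (Fin n ⊕ Fin s) K) := fun q =>
      Ideal.map_le_iff_le_comap.1 q.2
    refine Order.krullDim_le_of_strictMono
      (fun q => ⟨PrimeSpectrum.comap (MvPolynomial.rename Sum.inl).toRingHom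
        (PrimeSpectrum.comap (algebraMap (MvPolynomial (Fin n ⊕ Fin s) K)
          (Localization S')) q.1), ?_, ?_⟩) ?_
    · have h1 : I.map (MvPolynomial.rename (Sum.inl : Fin n → Fin n ⊕ Fin s)).toRingHom ≤ _ :=
        le_sup_left.trans (hle q)
      exact Ideal.map_le_iff_le_comap.1 h1
    · intro htop
      rw [Ideal.eq_top_iff_one, Submodule.mem_sup] at htop
      obtain ⟨a, ha, b, hb, hab⟩ := htop
      rw [hJg, ← aux_map_span, Ideal.mem_map_iff_of_surjective _ hsurj] at hb
      obtain ⟨h, hh, rfl⟩ := hb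
      have h1 : 1 + (-h) ∈ S' := (hmem _).2 (neg_mem hh)
      have hd := ((IsLocalization.isPrime_iff_isPrime_disjoint S' (Localization S')
        q.1.asIdeal).1 q.1.isPrime).2
      refine Set.disjoint_left.1 hd h1 ?_
      have h2 := hle q (aux_sub_mem g I h)
      have h3 : MvPolynomial.rename Sum.inl a ∈
        q.1.asIdeal.under (MvPolynomial (Fin n ⊕ Fin s) K) := ha
      have h4 : 1 + (-h) = MvPolynomial.rename Sum.inl a -
          (h - MvPolynomial.rename Sum.inl (substHom g h)) := by
        have := congrArg (MvPolynomial.rename (Sum.inl : Fin n → Fin n ⊕ Fin s)) hab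
        rw [map_add, map_one] at this
        rw [← this]; ring
      rw [SetLike.mem_coe, h4]
      exact Ideal.sub_mem _ h3 h2
    · intro q q' hqq
      refine lt_of_le_not_ge (Ideal.comap_mono (Ideal.comap_mono hqq.le)) ?_
      intro hcon
      apply hqq.not_ge
      have h1 : q'.1.asIdeal.under (MvPolynomial (Fin n ⊕ Fin s) K) ≤
          q.1.asIdeal.under (MvPolynomial (Fin n ⊕ Fin s) K) := by
        intro f hf
        have h2 : MvPolynomial.rename Sum.inl (substHom g f) ∈
            q'.1.asIdeal.under (MvPolynomial (Fin n ⊕ Fin s) K) := by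
          have := Ideal.sub_mem _ hf (hle q' (aux_sub_mem g I f))
          simpa using this
        have h3 : MvPolynomial.rename Sum.inl (substHom g f) ∈
            q.1.asIdeal.under (MvPolynomial (Fin n ⊕ Fin s) K) := hcon h2
        have := Ideal.add_mem _ h3 (hle q (aux_sub_mem g I f))
        simpa using this
      show q'.1.asIdeal ≤ q.1.asIdeal
      rw [← IsLocalization.map_under S' (Localization S') q'.1.asIdeal,
        ← IsLocalization.map_under S' (Localization S') q.1.asIdeal]
      exact Ideal.map_mono h1
  · have hpr : ∀ P : AuxX I J, (P.1.asIdeal.comap (substHom g)).IsPrime := fun P =>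
      Ideal.comap_isPrime _ _
    refine Order.krullDim_le_of_strictMono
      (fun P => ⟨⟨(P.1.asIdeal.comap (substHom g)).map (algebraMap _ (Localization S')),
        IsLocalization.isPrime_of_isPrime_disjoint S' _ _ (hpr P) (hdisj P)⟩, ?_⟩) ?_
    · exact Ideal.map_mono (aux_lift_le g I _ P.2.1)
    · intro P P' hPP
      refine lt_of_le_not_ge (Ideal.map_mono (Ideal.comap_mono hPP.le)) ?_
      intro hcon
      apply hPP.not_ge
      have h1 := Ideal.comap_mono
        (f := algebraMap (MvPolynomial (Fin n ⊕ Fin s) K) (Localization S')) hcon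
      have e1 := IsLocalization.under_map_of_isPrime_disjoint S' (Localization S')
        (hpr P) (hdisj P)
      have e2 := IsLocalization.under_map_of_isPrime_disjoint S' (Localization S')
        (hpr P') (hdisj P')
      have h2 : P'.1.asIdeal.comap (substHom g) ≤ P.1.asIdeal.comap (substHom g) := by
        rw [← e1, ← e2]; exact h1
      intro a ha
      obtain ⟨b, rfl⟩ := hsurj a
      exact h2 ha

/-- for a control order on `A' = K[x,t]` with local variables exactly the
`t`'s, the Krull dimension of `A/β(I,J)` equals the Krull dimension of `S'⁻¹A' / S'⁻¹I'`. -/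
theorem stmt_11 {K : Type*} [Field K] {n s : ℕ}
    (lt : ((Fin n ⊕ Fin s) →₀ ℕ) → ((Fin n ⊕ Fin s) →₀ ℕ) → Prop)
    (hctrl : IsControlOrder lt)
    (hloc : ∀ v : Fin n ⊕ Fin s, IsLocalVar lt v ↔ ∃ w : Fin s, v = Sum.inr w)
    (S' : Submonoid (MvPolynomial (Fin n ⊕ Fin s) K))
    (hS' : (S' : Set (MvPolynomial (Fin n ⊕ Fin s) K)) = SDen K lt)
    (I J : Ideal (MvPolynomial (Fin n) K)) (hI : I ≠ ⊤) (hJ : J ≠ ⊤)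
    (g : Fin s → MvPolynomial (Fin n) K) (hJg : J = Ideal.span (Set.range g))
    (k : ℕ) (Qd : Fin k → Ideal (MvPolynomial (Fin n) K))
    (hQd : MinPrimDecOn I Qd Finset.univ) :
    ringKrullDim (MvPolynomial (Fin n) K ⧸ extractionFrom J Qd Finset.univ) =
      ringKrullDim (Localization S' ⧸ (liftIdeal g I).map
        (algebraMap (MvPolynomial (Fin n ⊕ Fin s) K) (Localization S'))) := by
  rw [aux_dimA I J k Qd hQd, aux_dimB lt hctrl hloc S' hS' I J g hJg]
end
end
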